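/- Let A = ⟨L, ι, Σ, δ, α⟩ be a nondeterministic Büchi automaton and k = 2(|L| − |α|). Then A is universal, i.e., L(A) = Σ^ω, if and only if ⟨{(ι, k)}, ∅⟩ ∉ ν y · μ x · (Pre^{KVMH(A)}(x) ∪ (Pre^{KVMH(A)}(y) ∩ α')), where α' = Q × {∅} is the set of accepting states of KVMH(A) and Pre^{KVMH(A)} is its predecessor operator. -/

import Mathlib

/-!
The fixed point consists of the states from which some word is accepted, so the theorem amounts to
`KVMH M k` accepting exactly the words rejected by `M`.

If `KVMH M k` and `M` both accept `w`, the least rank carried along the accepting run of `M` is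
eventually constant, and it is even because accepting states carry even ranks. After the next time
the obligation set is empty, this run stays in the obligation set forever, a contradiction.

If `M` rejects `w`, strip the run graph on `w` alternately of the vertices that start no infinite
path and of those that reach no accepting vertex. The rank of a vertex is the stage at which it
disappears. Each double stage removes a nonaccepting state from almost every level, so ranks are at
most `2(|L| - |α|)`; they do not increase along edges, and no infinite path has only even ranks. The
run of `KVMH M k` carrying these ranks is accepting: were the obligation sets nonempty from some
time on, Kőnig's lemma would yield an infinite path of even ranks.
-/

/-- A nondeterministic Büchi automaton (NBW) over states `Q` and alphabet `A`:
an initial state, a transition function `δ : Q × A → 2^Q` and accepting states. -/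
structure NBW (Q : Type*) (A : Type*) where
  init : Q
  delta : Q → A → Set Q
  acc : Set Q

namespace NBW

variable {Q A : Type*}

/-- A run of an NBW on the infinite word `w`. -/
def IsRun (M : NBW Q A) (w : ℕ → A) (ρ : ℕ → Q) : Prop :=
  ρ 0 = M.init ∧ ∀ i, ρ (i + 1) ∈ M.delta (ρ i) (w i)

/-- The language of an NBW: words having a run visiting accepting states infinitely often. -/
def Lang (M : NBW Q A) : Set (ℕ → A) :=
  {w | ∃ ρ, M.IsRun w ρ ∧ ∀ n, ∃ i ≥ n, ρ i ∈ M.acc}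

/-- `Pre_σ(S)`: the σ-predecessors of the set `S`. -/
def PreSigma (M : NBW Q A) (σ : A) (S : Set Q) : Set Q :=
  {l | ∃ l' ∈ S, l' ∈ M.delta l σ}

/-- `Pre(S) = ⋃_σ Pre_σ(S)`. -/
def Pre (M : NBW Q A) (S : Set Q) : Set Q :=
  {l | ∃ σ, ∃ l' ∈ S, l' ∈ M.delta l σ}

/-- A pre-order `r` is a simulation for the NBW `M`. -/
def Simulation (M : NBW Q A) (r : Q → Q → Prop) : Prop :=
  (∀ l1 l2 l3 σ, r l3 l1 → l2 ∈ M.delta l1 σ →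
      ∃ l4, r l4 l2 ∧ l4 ∈ M.delta l3 σ) ∧
  (∀ l ∈ M.acc, ∀ l', r l' l → l' ∈ M.acc)

end NBW

/-- A set `S` is `r`-(downward-)closed. -/
def RClosed {Q : Type*} (r : Q → Q → Prop) (S : Set Q) : Prop :=
  ∀ l1 l2, r l1 l2 → l2 ∈ S → l1 ∈ S
/-- `Pre` as an order-homomorphism on the powerset lattice. -/
def preHom {Q A : Type*} (M : NBW Q A) : Set Q →o Set Q :=
  ⟨M.Pre, by rintro S T hST l ⟨σ, l', hl', hd⟩; exact ⟨σ, l', hST hl', hd⟩⟩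

/-- The map `x ↦ Pre(x) ∪ (Pre(Y) ∩ α)`. -/
def innerHom {Q A : Type*} (M : NBW Q A) (Y : Set Q) : Set Q →o Set Q :=
  ⟨fun X => M.Pre X ∪ (M.Pre Y ∩ M.acc), by
    intro S T hST
    exact Set.union_subset_union_left _ ((preHom M).mono hST)⟩

/-- The map `y ↦ μ x · (Pre(x) ∪ (Pre(y) ∩ α))`. -/
def outerHom {Q A : Type*} (M : NBW Q A) : Set Q →o Set Q :=
  ⟨fun Y => OrderHom.lfp (innerHom M Y), by
    intro Y Y' hY
    apply OrderHom.lfp.mono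
    intro X
    exact Set.union_subset_union_right _
      (Set.inter_subset_inter_left _ ((preHom M).mono hY))⟩

/-- `F_A = ν y · μ x · (Pre(x) ∪ (Pre(y) ∩ α))`. -/
def NBW.FixF {Q A : Type*} (M : NBW Q A) : Set Q :=
  OrderHom.gfp (outerHom M)
/-- `Q_k`: sets of pairs `(l, n)` with `n ≤ k` and `n` even whenever `l ∈ α`. -/
def Qk {Q A : Type*} (M : NBW Q A) (k : ℕ) : Set (Set (Q × ℕ)) :=
  {s | ∀ p ∈ s, p.2 ≤ k ∧ (p.1 ∈ M.acc → Even p.2)}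

/-- `odd = L × [k]^odd`. -/
def kvOdd (Q : Type*) (k : ℕ) : Set (Q × ℕ) := {p | Odd p.2 ∧ p.2 ≤ k}

/-- `∀ (l,n) ∈ s, ∀ l' ∈ δ(l,σ), ∃ n' ≤ n, (l',n') ∈ s'`. -/
def kvStep {Q A : Type*} (M : NBW Q A) (σ : A) (s s' : Set (Q × ℕ)) : Prop :=
  ∀ p ∈ s, ∀ l' ∈ M.delta p.1 σ, ∃ n' ≤ p.2, (l', n') ∈ s'

-- The composition of the Kupferman-Vardi and Miyano-Hayashi constructions:
-- an NBW over `Q_k × Q_k` (embedded in pairs of sets of pairs) accepting `L^c(M)`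
-- when `k = 2(|L| - |α|)`.
open Classical in
noncomputable def KVMH {Q A : Type*} (M : NBW Q A) (k : ℕ) :
    NBW (Set (Q × ℕ) × Set (Q × ℕ)) A where
  init := ({(M.init, k)}, ∅)
  delta := fun p σ =>
    if p.2 = ∅ then
      {q | ∃ s' ∈ Qk M k, q = (s', s' \ kvOdd Q k) ∧ kvStep M σ p.1 s'}
    else
      {q | ∃ s' ∈ Qk M k, ∃ o', q = (s', o' \ kvOdd Q k) ∧ o' ⊆ s' ∧
            kvStep M σ p.1 s' ∧ kvStep M σ p.2 o'}
  acc := {p | p.2 = ∅}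

/-- The pre-order `≼_univ` on `Q_k × Q_k`. -/
def univLe {Q : Type*} (p q : Set (Q × ℕ) × Set (Q × ℕ)) : Prop :=
  (∀ x ∈ p.1, ∃ n' ≤ x.2, (x.1, n') ∈ q.1) ∧
  (∀ x ∈ p.2, ∃ n' ≤ x.2, (x.1, n') ∈ q.2) ∧
  (p.2 = ∅ ↔ q.2 = ∅)

/-! ### Infinite paths and ranks in a directed graph -/

section Graph

variable {V : Type*} {R : V → V → Prop} {X Y B : Set V}

/-- `p` is an infinite path of the graph `R` inside the vertex set `Y`. -/
def IsInfinitePath (R : V → V → Prop) (Y : Set V) (p : ℕ → V) : Prop :=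
  ∀ i, p i ∈ Y ∧ R (p i) (p (i + 1))

/-- The vertices that start an infinite path inside `Y`. -/
def persistent (R : V → V → Prop) (Y : Set V) : Set V :=
  {v | ∃ p, p 0 = v ∧ IsInfinitePath R Y p}

/-- The vertices from which a path of length `n` inside `Y` leads to `B`. -/
def reachesIn (R : V → V → Prop) (Y B : Set V) : ℕ → Set V
  | 0 => Y ∩ B
  | n + 1 => {v ∈ Y | ∃ v' ∈ reachesIn R Y B n, R v v'}

/-- The vertices from which some finite path inside `Y` leads to `B`. -/
def reaches (R : V → V → Prop) (Y B : Set V) : Set V :=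
  ⋃ n, reachesIn R Y B n

/-- The length of a shortest path inside `Y` from `v` to `B`; the junk value `0` if there is
none. -/
noncomputable def distTo (R : V → V → Prop) (Y B : Set V) (v : V) : ℕ :=
  sInf {n | v ∈ reachesIn R Y B n}

lemma IsInfinitePath.mono {p : ℕ → V} (hp : IsInfinitePath R X p) (hXY : X ⊆ Y) :
    IsInfinitePath R Y p :=
  fun i => ⟨hXY (hp i).1, (hp i).2⟩

lemma IsInfinitePath.mem_persistent {p : ℕ → V} (hp : IsInfinitePath R Y p) (i : ℕ) :
    p i ∈ persistent R Y :=
  ⟨fun j => p (i + j), rfl, fun j => hp (i + j)⟩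

lemma persistent_subset : persistent R Y ⊆ Y := by
  rintro _ ⟨p, rfl, hp⟩
  exact (hp 0).1

lemma mem_persistent_of_rel {u v : V} (hu : u ∈ Y) (huv : R u v) (hv : v ∈ persistent R Y) :
    u ∈ persistent R Y := by
  obtain ⟨p, rfl, hp⟩ := hv
  exact ⟨fun | 0 => u | i + 1 => p i, rfl, fun | 0 => ⟨hu, huv⟩ | i + 1 => hp i⟩

lemma exists_rel_of_mem_persistent {v : V} (hv : v ∈ persistent R Y) :
    ∃ v' ∈ persistent R Y, R v v' := by
  obtain ⟨p, rfl, hp⟩ := hv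
  exact ⟨p 1, hp.mem_persistent 1, (hp 0).2⟩

lemma reaches_subset : reaches R Y B ⊆ Y :=
  Set.iUnion_subset fun
    | 0 => Set.inter_subset_left
    | _ + 1 => Set.sep_subset _ _

lemma inter_subset_reaches : Y ∩ B ⊆ reaches R Y B :=
  Set.subset_iUnion (reachesIn R Y B) 0

lemma mem_reaches_of_rel {u v : V} (hu : u ∈ Y) (huv : R u v) (hv : v ∈ reaches R Y B) :
    u ∈ reaches R Y B := by
  obtain ⟨n, hn⟩ := Set.mem_iUnion.1 hv
  exact Set.mem_iUnion.2 ⟨n + 1, hu, v, hn, huv⟩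

lemma exists_rel_distTo_lt (hreach : Y ⊆ reaches R Y B) (hsucc : ∀ v ∈ Y, ∃ v' ∈ Y, R v v')
    (v : Y) :
    ∃ v' : Y, R v v' ∧ (v.1 ∉ B → distTo R Y B v' < distTo R Y B v) := by
  have hmem : v.1 ∈ reachesIn R Y B (distTo R Y B v) :=
    Nat.sInf_mem (Set.mem_iUnion.1 (hreach v.2))
  generalize distTo R Y B v = d at hmem ⊢
  cases d with
  | zero =>
    obtain ⟨v', hv', hR⟩ := hsucc v v.2
    exact ⟨⟨v', hv'⟩, hR, fun hB => absurd hmem.2 hB⟩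
  | succ d =>
    obtain ⟨-, v', hv', hR⟩ := hmem
    exact ⟨⟨v', reaches_subset (Set.mem_iUnion.2 ⟨d, hv'⟩)⟩, hR,
      fun _ => Nat.lt_succ_of_le (Nat.sInf_le hv')⟩

/-- Following shortest paths to `B`, the distance to `B` drops at every step taken outside `B`. -/
lemma exists_recurrent_path (hreach : Y ⊆ reaches R Y B) (hsucc : ∀ v ∈ Y, ∃ v' ∈ Y, R v v')
    {v : V} (hv : v ∈ Y) :
    ∃ p, p 0 = v ∧ IsInfinitePath R Y p ∧ ∀ n, ∃ i ≥ n, p i ∈ B := by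
  choose next hnext hcloser using exists_rel_distTo_lt hreach hsucc
  let q : ℕ → Y := fun i => next^[i] ⟨v, hv⟩
  have hq (i : ℕ) : q (i + 1) = next (q i) := Function.iterate_succ_apply' next i _
  have hR (i : ℕ) : R (q i) (q (i + 1)) := hq i ▸ hnext (q i)
  refine ⟨fun i => q i, rfl, fun i => ⟨(q i).2, hR i⟩, fun n => ?_⟩
  by_contra! hB
  refine not_strictAnti_of_wellFoundedLT (fun i => distTo R Y B (q (n + i)))
    (strictAnti_nat_of_succ_lt fun i => ?_)
  rw [← Nat.add_assoc, hq]
  exact hcloser _ (hB _ (Nat.le_add_right n i))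

/-- The decreasing sequence of vertex sets defining Kupferman–Vardi ranks: starting from `X`, remove
alternately the vertices that start no infinite path and those that do not reach `B`. -/
def strip (R : V → V → Prop) (X B : Set V) : ℕ → Set V
  | 0 => X
  | n + 1 => if Even n then persistent R (strip R X B n) else reaches R (strip R X B n) B

/-- The stage of `strip` at which `v` is removed; the junk value `0` if there is none. -/
noncomputable def stripRank (R : V → V → Prop) (X B : Set V) (v : V) : ℕ :=
  sInf {n | v ∉ strip R X B (n + 1)}

lemma strip_succ_of_even {n : ℕ} (hn : Even n) :
    strip R X B (n + 1) = persistent R (strip R X B n) :=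
  if_pos hn

lemma strip_succ_of_odd {n : ℕ} (hn : Odd n) :
    strip R X B (n + 1) = reaches R (strip R X B n) B :=
  if_neg (Nat.not_even_iff_odd.2 hn)

lemma strip_antitone : Antitone (strip R X B) := by
  refine antitone_nat_of_succ_le fun n => ?_
  rcases n.even_or_odd with hn | hn
  · exact (strip_succ_of_even hn).trans_subset persistent_subset
  · exact (strip_succ_of_odd hn).trans_subset reaches_subset

lemma mem_strip_succ_of_rel {n : ℕ} {u v : V} (hu : u ∈ strip R X B n) (huv : R u v)
    (hv : v ∈ strip R X B (n + 1)) : u ∈ strip R X B (n + 1) := by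
  rcases n.even_or_odd with hn | hn
  · rw [strip_succ_of_even hn] at hv ⊢
    exact mem_persistent_of_rel hu huv hv
  · rw [strip_succ_of_odd hn] at hv ⊢
    exact mem_reaches_of_rel hu huv hv

/-- If the vertices left after an even stage all reached `B`, they would start a recurrent path. So
some vertex does not, and neither do the vertices on any infinite path from it. -/
lemma exists_path_notMem_strip {n : ℕ} (hn : Even n) (hne : (strip R X B (n + 1)).Nonempty)
    (hrec : ∀ p, IsInfinitePath R X p → ∃ m, ∀ i ≥ m, p i ∉ B) :
    ∃ p, IsInfinitePath R (strip R X B n) p ∧ ∀ i, p i ∉ B ∧ p i ∉ strip R X B (n + 2) := by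
  have hpersist := strip_succ_of_even (R := R) (X := X) (B := B) hn
  have hreaches := strip_succ_of_odd (R := R) (X := X) (B := B) hn.add_one
  obtain ⟨v, hv, hv'⟩ : ∃ v ∈ strip R X B (n + 1), v ∉ strip R X B (n + 2) := by
    by_contra! hall
    obtain ⟨v, hv⟩ := hne
    obtain ⟨p, -, hp, hpB⟩ := exists_recurrent_path (R := R) (B := B)
      (hreaches ▸ hall)
      (fun u hu => by rw [hpersist] at hu ⊢; exact exists_rel_of_mem_persistent hu) hv
    obtain ⟨m, hm⟩ := hrec p (hp.mono (strip_antitone (Nat.zero_le _)))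
    obtain ⟨i, hi, hiB⟩ := hpB m
    exact hm i hi hiB
  obtain ⟨p, rfl, hp⟩ := hpersist ▸ hv
  have hmem (i : ℕ) : p i ∈ strip R X B (n + 1) := hpersist ▸ hp.mem_persistent i
  have hnot (i : ℕ) : p i ∉ strip R X B (n + 2) := by
    induction i with
    | zero => exact hv'
    | succ i ih => exact fun h => ih (mem_strip_succ_of_rel (hmem i) (hp i).2 h)
  exact ⟨p, hp, fun i => ⟨fun hB => hnot i (hreaches ▸ inter_subset_reaches ⟨hmem i, hB⟩), hnot i⟩⟩

lemma mem_strip_stripRank {v : V} (hv : v ∈ X) : v ∈ strip R X B (stripRank R X B v) := by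
  cases h : stripRank R X B v with
  | zero => exact hv
  | succ n => exact not_not.1 (Nat.notMem_of_lt_sInf (n.lt_succ_self.trans_eq h.symm))

lemma notMem_strip_stripRank_succ {m : ℕ} (hm : strip R X B (m + 1) = ∅) (v : V) :
    v ∉ strip R X B (stripRank R X B v + 1) :=
  Nat.sInf_mem (s := {n | v ∉ strip R X B (n + 1)}) ⟨m, fun h => Set.notMem_empty v (hm ▸ h)⟩

lemma stripRank_le {m : ℕ} (hm : strip R X B (m + 1) = ∅) (v : V) : stripRank R X B v ≤ m :=
  Nat.sInf_le (s := {n | v ∉ strip R X B (n + 1)}) fun h => Set.notMem_empty v (hm ▸ h)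

lemma stripRank_le_of_rel {m : ℕ} (hm : strip R X B (m + 1) = ∅) {u v : V} (hu : u ∈ X)
    (hv : v ∈ X) (huv : R u v) : stripRank R X B v ≤ stripRank R X B u := by
  by_contra! hlt
  exact notMem_strip_stripRank_succ hm u <|
    mem_strip_succ_of_rel (mem_strip_stripRank hu) huv (strip_antitone hlt (mem_strip_stripRank hv))

lemma even_stripRank {m : ℕ} (hm : strip R X B (m + 1) = ∅) {v : V} (hv : v ∈ X) (hB : v ∈ B) :
    Even (stripRank R X B v) := by
  by_contra hodd
  refine notMem_strip_stripRank_succ hm v ?_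
  rw [strip_succ_of_odd (Nat.not_even_iff_odd.1 hodd)]
  exact inter_subset_reaches ⟨mem_strip_stripRank hv, hB⟩

/-- Past the point where the rank of an infinite path is least, the path stays in the corresponding
stage of `strip`; if this stage were even, the path would survive to the next one. -/
lemma exists_odd_stripRank {m : ℕ} (hm : strip R X B (m + 1) = ∅) {p : ℕ → V}
    (hp : IsInfinitePath R X p) : ∃ i, Odd (stripRank R X B (p i)) := by
  let r : ℕ → ℕ := fun i => stripRank R X B (p i)
  have hanti : Antitone r := antitone_nat_of_succ_le fun i =>
    stripRank_le_of_rel hm (hp i).1 (hp (i + 1)).1 (hp i).2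
  let N := Function.argmin r
  have hconst (i : ℕ) : stripRank R X B (p (N + i)) = stripRank R X B (p N) :=
    (hanti (Nat.le_add_right N i)).antisymm (Function.argmin_le r _)
  refine ⟨N, Nat.not_even_iff_odd.1 fun heven => notMem_strip_stripRank_succ hm (p N) ?_⟩
  rw [strip_succ_of_even heven]
  refine ⟨fun i => p (N + i), rfl, fun i => ⟨?_, (hp (N + i)).2⟩⟩
  rw [← hconst i]
  exact mem_strip_stripRank (hp (N + i)).1

open CategoryTheory in
lemma exists_path_of_forall_exists_pred {S : ℕ → Set V} {E : ℕ → V → V → Prop}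
    (hfin : ∀ i, (S i).Finite) (hne : ∀ i, (S i).Nonempty)
    (hpred : ∀ i, ∀ v ∈ S (i + 1), ∃ u ∈ S i, E i u v) :
    ∃ p : ℕ → V, ∀ i, p i ∈ S i ∧ E i (p i) (p (i + 1)) := by
  choose pred hpred_mem hpred_rel using hpred
  let F : ℕᵒᵖ ⥤ Type _ := Functor.ofOpSequence (X := fun i => S i)
    fun i => ↾fun v : S (i + 1) => (⟨pred i v v.2, hpred_mem i v v.2⟩ : S i)
  have (i : ℕᵒᵖ) : Finite (F.obj i) := hfin i.unop
  have (i : ℕᵒᵖ) : Nonempty (F.obj i) := (hne i.unop).to_subtype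
  obtain ⟨s, hs⟩ := nonempty_sections_of_finite_inverse_system F
  let p (i : ℕ) : S i := s (Opposite.op i)
  have hp (i : ℕ) : pred i (p (i + 1)) (p (i + 1)).2 = p i := by
    have := hs (homOfLE (Nat.le_add_right i 1)).op
    rw [Functor.ofOpSequence_map_homOfLE_succ] at this
    exact congrArg Subtype.val this
  have hE (i : ℕ) : E i (p i) (p (i + 1)) := hp i ▸ hpred_rel i _ (p (i + 1)).2
  exact ⟨fun i => p i, fun i => ⟨(p i).2, hE i⟩⟩

end Graph

namespace NBW

variable {Q A : Type*} {M : NBW Q A} {w : ℕ → A} {k : ℕ}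

/-! ### The fixed point and nonemptiness -/

/-- The words accepted from the state `q`. -/
def LangFrom (M : NBW Q A) (q : Q) : Set (ℕ → A) :=
  Lang { M with init := q }

lemma shift_mem_langFrom {ρ : ℕ → Q} (hρ : ∀ i, ρ (i + 1) ∈ M.delta (ρ i) (w i))
    (hacc : ∀ n, ∃ i ≥ n, ρ i ∈ M.acc) (i : ℕ) : (fun j => w (i + j)) ∈ M.LangFrom (ρ i) := by
  refine ⟨fun j => ρ (i + j), ⟨rfl, fun j => hρ (i + j)⟩, fun n => ?_⟩
  obtain ⟨m, hm, hm_acc⟩ := hacc (i + n)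
  obtain ⟨j, rfl⟩ := Nat.exists_eq_add_of_le (Nat.le_of_add_right_le hm)
  exact ⟨j, Nat.le_of_add_le_add_left hm, hm_acc⟩

lemma mem_langFrom_of_mem_delta {q q' : Q} (hq' : q' ∈ M.delta q (w 0))
    (hw : (fun i => w (i + 1)) ∈ M.LangFrom q') : w ∈ M.LangFrom q := by
  obtain ⟨ρ, ⟨rfl, hρ⟩, hacc⟩ := hw
  refine ⟨fun | 0 => q | i + 1 => ρ i, ⟨rfl, fun | 0 => hq' | i + 1 => hρ i⟩, fun n => ?_⟩
  obtain ⟨i, hi, hi_acc⟩ := hacc n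
  exact ⟨i + 1, Nat.le_succ_of_le hi, hi_acc⟩

lemma lfp_innerHom_fixF (M : NBW Q A) : OrderHom.lfp (innerHom M M.FixF) = M.FixF :=
  OrderHom.map_gfp (outerHom M)

lemma pre_fixF (M : NBW Q A) : M.Pre M.FixF = M.FixF := by
  have hinner := OrderHom.map_lfp (innerHom M M.FixF)
  rw [lfp_innerHom_fixF] at hinner
  exact (Set.union_eq_self_of_subset_right Set.inter_subset_left).symm.trans hinner

lemma fixF_subset_reaches (M : NBW Q A) :
    M.FixF ⊆ reaches (fun q q' => ∃ σ, q' ∈ M.delta q σ) M.FixF M.acc := by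
  suffices h : OrderHom.lfp (innerHom M M.FixF) ≤
      reaches (fun q q' => ∃ σ, q' ∈ M.delta q σ) M.FixF M.acc from
    M.lfp_innerHom_fixF.symm.trans_le h
  refine OrderHom.lfp_le _ ?_
  rintro q (⟨σ, q', hq', hδ⟩ | ⟨hpre, hacc⟩)
  · have hq : q ∈ M.FixF := M.pre_fixF ▸ ⟨σ, q', reaches_subset hq', hδ⟩
    exact mem_reaches_of_rel hq ⟨σ, hδ⟩ hq'
  · exact inter_subset_reaches ⟨M.pre_fixF ▸ hpre, hacc⟩

lemma langFrom_nonempty_of_mem_fixF {q : Q} (hq : q ∈ M.FixF) : (M.LangFrom q).Nonempty := by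
  have hsucc : ∀ l ∈ M.FixF, ∃ l' ∈ M.FixF, ∃ σ, l' ∈ M.delta l σ := by
    intro l hl
    rw [← pre_fixF] at hl
    obtain ⟨σ, l', hl', hδ⟩ := hl
    exact ⟨l', hl', σ, hδ⟩
  obtain ⟨ρ, hρ0, hρ, hacc⟩ := exists_recurrent_path M.fixF_subset_reaches hsucc hq
  choose w hw using fun i => (hρ i).2
  exact ⟨w, ρ, ⟨hρ0, hw⟩, hacc⟩

lemma mem_fixF_of_mem_langFrom {q : Q} (hw : w ∈ M.LangFrom q) : q ∈ M.FixF := by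
  let Y : Set Q := {l | (M.LangFrom l).Nonempty}
  suffices hY : Y ⊆ outerHom M Y from OrderHom.le_gfp _ hY ⟨w, hw⟩
  rintro l ⟨u, ρ, ⟨rfl, hρ⟩, hacc⟩
  have hρY (i : ℕ) : ρ i ∈ Y := ⟨_, shift_mem_langFrom hρ hacc i⟩
  obtain ⟨m, -, hm⟩ := hacc 0
  have hfold : innerHom M Y (outerHom M Y) = outerHom M Y := OrderHom.map_lfp (innerHom M Y)
  refine Nat.decreasingInduction (motive := fun i _ => ρ i ∈ outerHom M Y) (fun i _ ih => ?_) ?_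
    m.zero_le
  · rw [← hfold]
    exact Or.inl ⟨u i, ρ (i + 1), ih, hρ i⟩
  · rw [← hfold]
    exact Or.inr ⟨⟨u m, ρ (m + 1), hρY (m + 1), hρ m⟩, hm⟩

lemma init_mem_fixF_iff (M : NBW Q A) : M.init ∈ M.FixF ↔ M.Lang.Nonempty :=
  ⟨langFrom_nonempty_of_mem_fixF, fun ⟨_, hw⟩ => mem_fixF_of_mem_langFrom hw⟩

/-! ### Ranking the run graph of a rejected word -/

/-- The states reachable from `S` by reading the letter `σ`. -/
def post (M : NBW Q A) (σ : A) (S : Set Q) : Set Q :=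
  ⋃ l ∈ S, M.delta l σ

/-- The states in which a run on `w` can be at time `i`. -/
def reachAt (M : NBW Q A) (w : ℕ → A) : ℕ → Set Q
  | 0 => {M.init}
  | i + 1 => M.post (w i) (reachAt M w i)

/-- The edges of the run graph on `w`, in which the vertex `(i, l)` is the state `l` at time `i`. -/
def runEdge (M : NBW Q A) (w : ℕ → A) (u v : ℕ × Q) : Prop :=
  v.1 = u.1 + 1 ∧ v.2 ∈ M.delta u.2 (w u.1)

/-- The vertices of the run graph on `w`. -/
def runVertices (M : NBW Q A) (w : ℕ → A) : Set (ℕ × Q) :=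
  {v | v.2 ∈ M.reachAt w v.1}

/-- The stages of the removal process that ranks the run graph on `w`. -/
def stripRun (M : NBW Q A) (w : ℕ → A) : ℕ → Set (ℕ × Q) :=
  strip (M.runEdge w) (M.runVertices w) (Prod.snd ⁻¹' M.acc)

lemma mem_post {σ : A} {S : Set Q} {l' : Q} : l' ∈ M.post σ S ↔ ∃ l ∈ S, l' ∈ M.delta l σ :=
  Set.mem_iUnion₂.trans <| by simp only [exists_prop]

lemma post_mono {σ : A} {S T : Set Q} (hST : S ⊆ T) : M.post σ S ⊆ M.post σ T :=
  Set.biUnion_subset_biUnion_left hST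

lemma finite_reachAt (hδ : ∀ l σ, (M.delta l σ).Finite) (w : ℕ → A) (i : ℕ) :
    (M.reachAt w i).Finite := by
  induction i with
  | zero => exact Set.finite_singleton _
  | succ i ih => exact ih.biUnion fun l _ => hδ l _

lemma mem_runVertices_of_runEdge {u v : ℕ × Q} (hu : u ∈ M.runVertices w)
    (huv : M.runEdge w u v) : v ∈ M.runVertices w := by
  obtain ⟨j, l'⟩ := v
  obtain ⟨rfl, hl'⟩ := huv
  exact mem_post.2 ⟨u.2, hu, hl'⟩

lemma fst_of_isInfinitePath {Y : Set (ℕ × Q)} {p : ℕ → ℕ × Q}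
    (hp : IsInfinitePath (M.runEdge w) Y p) (i : ℕ) : (p i).1 = (p 0).1 + i := by
  induction i with
  | zero => rfl
  | succ i ih => rw [(hp i).2.1, ih, Nat.add_assoc]

lemma mem_lang_of_shift_mem_langFrom {i : ℕ} {l : Q} (hl : l ∈ M.reachAt w i)
    (hw : (fun j => w (i + j)) ∈ M.LangFrom l) : w ∈ M.Lang := by
  induction i generalizing l with
  | zero =>
    obtain rfl : l = M.init := hl
    exact (funext fun j => congrArg w j.zero_add : (fun j => w (0 + j)) = w) ▸ hw
  | succ i ih =>
    obtain ⟨l₀, hl₀, hδ⟩ := mem_post.1 hl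
    refine ih hl₀ (mem_langFrom_of_mem_delta hδ ?_)
    simpa only [Nat.add_right_comm, Nat.add_assoc] using hw

lemma eventually_notMem_acc_of_notMem_lang (hw : w ∉ M.Lang) {p : ℕ → ℕ × Q}
    (hp : IsInfinitePath (M.runEdge w) (M.runVertices w) p) :
    ∃ m, ∀ i ≥ m, p i ∉ Prod.snd ⁻¹' M.acc := by
  by_contra! hacc
  refine hw (mem_lang_of_shift_mem_langFrom (hp 0).1
    ⟨fun i => (p i).2, ⟨rfl, fun i => ?_⟩, hacc⟩)
  change _ ∈ M.delta _ (w ((p 0).1 + i))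
  rw [← fst_of_isInfinitePath hp i]
  exact (hp i).2.2

/-- Every double stage removes an infinite path of nonaccepting vertices, hence one nonaccepting
state from all levels that this path meets. -/
lemma eventually_ncard_stripRun_add_le (hacc : M.accᶜ.Finite) (hw : w ∉ M.Lang) {j : ℕ}
    (hne : ∀ m < j, (M.stripRun w (2 * m + 1)).Nonempty) :
    ∃ N, ∀ i ≥ N, {l | l ∉ M.acc ∧ (i, l) ∈ M.stripRun w (2 * j)}.ncard + j ≤ M.accᶜ.ncard := by
  induction j with
  | zero => exact ⟨0, fun i _ => Set.ncard_le_ncard (Set.sep_subset _ _) hacc⟩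
  | succ j ih =>
    obtain ⟨N, hN⟩ := ih fun m hm => hne m (Nat.lt_succ_of_lt hm)
    obtain ⟨p, hp, hp_removed⟩ := exists_path_notMem_strip (even_two_mul j)
      (hne j j.lt_succ_self) fun p => eventually_notMem_acc_of_notMem_lang hw
    refine ⟨max N (p 0).1, fun i hi => ?_⟩
    obtain ⟨hNi, hpi⟩ := max_le_iff.1 hi
    obtain ⟨t, rfl⟩ := Nat.exists_eq_add_of_le hpi
    have hvertex : ((p 0).1 + t, (p t).2) = p t :=
      Prod.ext (fst_of_isInfinitePath hp t).symm rfl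
    have hlt : {l | l ∉ M.acc ∧ ((p 0).1 + t, l) ∈ M.stripRun w (2 * (j + 1))}.ncard <
        {l | l ∉ M.acc ∧ ((p 0).1 + t, l) ∈ M.stripRun w (2 * j)}.ncard := by
      refine Set.ncard_lt_ncard ((Set.ssubset_iff_of_subset ?_).2 ⟨(p t).2, ?_, ?_⟩)
        (hacc.subset (Set.sep_subset _ _))
      · exact fun l hl => ⟨hl.1, strip_antitone (Nat.le_add_right (2 * j) 2) hl.2⟩
      · exact ⟨(hp_removed t).1, hvertex.symm ▸ (hp t).1⟩
      · exact fun h => (hp_removed t).2 (hvertex ▸ h.2)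
    have := hN _ hNi
    omega

lemma stripRun_eq_empty (hacc : M.accᶜ.Finite) (hw : w ∉ M.Lang) :
    M.stripRun w (2 * M.accᶜ.ncard + 1) = ∅ := by
  by_contra! hne
  obtain ⟨N, hN⟩ := eventually_ncard_stripRun_add_le (j := M.accᶜ.ncard + 1) hacc hw
    fun m hm => hne.mono (strip_antitone (by omega))
  have := hN N le_rfl
  omega

/-- An odd ranking, in the sense of Kupferman and Vardi, of the run graph on `w`. Since `KVMH M k`
starts with rank `k` whatever the initial state, the rank at time `0` is `k` and is exempt from the
parity condition. -/
structure IsOddRanking (M : NBW Q A) (w : ℕ → A) (k : ℕ) (g : ℕ × Q → ℕ) : Prop where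
  init_eq : g (0, M.init) = k
  even : ∀ v ∈ M.runVertices w, v.1 ≠ 0 → v.2 ∈ M.acc → Even (g v)
  le_of_edge : ∀ u ∈ M.runVertices w, ∀ v, M.runEdge w u v → g v ≤ g u
  exists_odd : ∀ p, IsInfinitePath (M.runEdge w) (M.runVertices w) p → ∃ i, Odd (g (p i))

lemma exists_isOddRanking (hacc : M.accᶜ.Finite) (hk : 2 * M.accᶜ.ncard ≤ k) (hw : w ∉ M.Lang) :
    ∃ g, M.IsOddRanking w k g := by
  have hempty := stripRun_eq_empty hacc hw
  let r := stripRank (M.runEdge w) (M.runVertices w) (Prod.snd ⁻¹' M.acc)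
  refine ⟨fun v => if v.1 = 0 then k else r v, if_pos rfl, fun v hv hv0 hv_acc => ?_,
    fun u hu v huv => ?_, fun p hp => ?_⟩
  · rw [if_neg hv0]
    exact even_stripRank hempty hv hv_acc
  · rw [if_neg (by rw [huv.1]; exact Nat.succ_ne_zero _)]
    split_ifs
    · exact (stripRank_le hempty v).trans hk
    · exact stripRank_le_of_rel hempty hu (mem_runVertices_of_runEdge hu huv) huv
  · obtain ⟨i, hi⟩ := exists_odd_stripRank hempty (p := fun i => p (i + 1)) fun i => hp (i + 1)
    refine ⟨i + 1, ?_⟩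
    rwa [if_neg (by rw [(hp i).2.1]; exact Nat.succ_ne_zero _)]

lemma IsOddRanking.le {g : ℕ × Q → ℕ} (hg : M.IsOddRanking w k g) {i : ℕ} {l : Q}
    (hl : l ∈ M.reachAt w i) : g (i, l) ≤ k := by
  induction i generalizing l with
  | zero =>
    obtain rfl : l = M.init := hl
    exact hg.init_eq.le
  | succ i ih =>
    obtain ⟨l₀, hl₀, hδ⟩ := mem_post.1 hl
    exact (hg.le_of_edge (i, l₀) hl₀ (i + 1, l) ⟨rfl, hδ⟩).trans (ih hl₀)

/-! ### The complement automaton -/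

lemma mem_delta_KVMH_of_snd_eq_empty {x y : Set (Q × ℕ) × Set (Q × ℕ)} {σ : A} (hx : x.2 = ∅) :
    y ∈ (KVMH M k).delta x σ ↔
      y.1 ∈ Qk M k ∧ kvStep M σ x.1 y.1 ∧ y.2 = y.1 \ kvOdd Q k := by
  simp only [KVMH, if_pos hx]
  constructor
  · rintro ⟨s, hs, rfl, hstep⟩
    exact ⟨hs, hstep, rfl⟩
  · rintro ⟨hs, hstep, ho⟩
    exact ⟨y.1, hs, Prod.ext rfl ho, hstep⟩

lemma mem_delta_KVMH_of_snd_ne_empty {x y : Set (Q × ℕ) × Set (Q × ℕ)} {σ : A} (hx : x.2 ≠ ∅) :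
    y ∈ (KVMH M k).delta x σ ↔ y.1 ∈ Qk M k ∧ kvStep M σ x.1 y.1 ∧
      ∃ o ⊆ y.1, kvStep M σ x.2 o ∧ y.2 = o \ kvOdd Q k := by
  simp only [KVMH, if_neg hx]
  constructor
  · rintro ⟨s, hs, o, rfl, hos, hstep, hstep'⟩
    exact ⟨hs, hstep, o, hos, hstep', rfl⟩
  · rintro ⟨hs, hstep, o, hos, hstep', ho⟩
    exact ⟨y.1, hs, o, Prod.ext rfl ho, hos, hstep, hstep'⟩

lemma fst_of_mem_delta_KVMH {x y : Set (Q × ℕ) × Set (Q × ℕ)} {σ : A}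
    (hy : y ∈ (KVMH M k).delta x σ) : y.1 ∈ Qk M k ∧ kvStep M σ x.1 y.1 := by
  by_cases hx : x.2 = ∅
  · exact ((mem_delta_KVMH_of_snd_eq_empty hx).1 hy).imp_right And.left
  · exact ((mem_delta_KVMH_of_snd_ne_empty hx).1 hy).imp_right And.left

section Soundness

variable {P : ℕ → Set (Q × ℕ) × Set (Q × ℕ)} {ρ : ℕ → Q} {c j N : ℕ}

lemma exists_eventually_isLeast_rank (hP : (KVMH M k).IsRun w P) (hρ : M.IsRun w ρ) :
    ∃ c N, ∀ i ≥ N, IsLeast {n | (ρ i, n) ∈ (P i).1} c := by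
  let ranks : Set ℕ := {n | ∃ i, (ρ i, n) ∈ (P i).1}
  have hne : ranks.Nonempty := ⟨k, 0, by rw [hP.1, hρ.1]; exact Set.mem_singleton _⟩
  obtain ⟨N, hN⟩ := Nat.sInf_mem hne
  have hmin {i n : ℕ} (h : (ρ i, n) ∈ (P i).1) : sInf ranks ≤ n := Nat.sInf_le ⟨i, h⟩
  refine ⟨sInf ranks, N, fun i hi => ⟨?_, fun n hn => hmin hn⟩⟩
  induction i, hi using Nat.le_induction with
  | base => exact hN
  | succ i _ ih =>
    obtain ⟨n, hn, hmem⟩ := (fst_of_mem_delta_KVMH (hP.2 i)).2 _ ih _ (hρ.2 i)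
    exact (hmin hmem).antisymm hn ▸ hmem

/-- An even least rank is never removed from the obligation set and, being least, cannot drop. -/
lemma least_rank_mem_snd (hP : (KVMH M k).IsRun w P) (hρ : M.IsRun w ρ)
    (hc : ∀ i ≥ N, IsLeast {n | (ρ i, n) ∈ (P i).1} c) (hc_even : Even c) (hj : N ≤ j)
    (hPj : (P j).2 = ∅) {i : ℕ} (hi : j + 1 ≤ i) : (ρ i, c) ∈ (P i).2 := by
  have hnotOdd (l : Q) : (l, c) ∉ kvOdd Q k := fun h => Nat.not_even_iff_odd.2 h.1 hc_even
  induction i, hi using Nat.le_induction with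
  | base =>
    rw [((mem_delta_KVMH_of_snd_eq_empty hPj).1 (hP.2 j)).2.2]
    exact ⟨(hc (j + 1) (by omega)).1, hnotOdd _⟩
  | succ i hi ih =>
    obtain ⟨-, -, o, ho, hstep, hPo⟩ :=
      (mem_delta_KVMH_of_snd_ne_empty (Set.nonempty_of_mem ih).ne_empty).1 (hP.2 i)
    obtain ⟨n, hn, hmem⟩ := hstep _ ih _ (hρ.2 i)
    obtain rfl : n = c := hn.antisymm ((hc (i + 1) (by omega)).2 (ho hmem))
    exact hPo ▸ ⟨hmem, hnotOdd _⟩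

lemma disjoint_lang_KVMH (M : NBW Q A) (k : ℕ) : Disjoint (KVMH M k).Lang M.Lang := by
  rw [Set.disjoint_left]
  rintro w ⟨P, hP, hP_acc⟩ ⟨ρ, hρ, hρ_acc⟩
  obtain ⟨c, N, hc⟩ := exists_eventually_isLeast_rank hP hρ
  have hc_even : Even c := by
    obtain ⟨i', hi, hi_acc⟩ := hρ_acc (N + 1)
    obtain ⟨i, rfl⟩ := Nat.exists_eq_add_of_le' (Nat.one_le_of_lt hi)
    exact ((fst_of_mem_delta_KVMH (hP.2 i)).1 _ (hc (i + 1) (by omega)).1).2 hi_acc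
  obtain ⟨j, hj, hPj⟩ := hP_acc N
  obtain ⟨i, hi, hPi⟩ := hP_acc (j + 1)
  have hmem := least_rank_mem_snd hP hρ hc hc_even hj hPj hi
  exact Set.notMem_empty _ ((show (P i).2 = ∅ from hPi) ▸ hmem)

end Soundness

section Completeness

variable {g : ℕ × Q → ℕ} {i : ℕ} {S : Set Q}

/-- The states in `S`, each paired with its rank at time `i`. -/
def ranked (g : ℕ × Q → ℕ) (i : ℕ) (S : Set Q) : Set (Q × ℕ) :=
  (fun l => (l, g (i, l))) '' S

open Classical in
/-- The Miyano–Hayashi breakpoint sets of a ranking `g`: the states reached by runs whose ranks have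
all been even since the last time this set was empty. -/
noncomputable def owing (M : NBW Q A) (w : ℕ → A) (g : ℕ × Q → ℕ) : ℕ → Set Q
  | 0 => ∅
  | i + 1 =>
    {l ∈ M.post (w i) (if owing M w g i = ∅ then M.reachAt w i else owing M w g i) |
      Even (g (i + 1, l))}

lemma owing_succ_of_eq_empty (h : M.owing w g i = ∅) :
    M.owing w g (i + 1) = {l ∈ M.reachAt w (i + 1) | Even (g (i + 1, l))} := by
  rw [owing, if_pos h, reachAt]

lemma owing_succ_of_ne_empty (h : M.owing w g i ≠ ∅) :
    M.owing w g (i + 1) = {l ∈ M.post (w i) (M.owing w g i) | Even (g (i + 1, l))} := by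
  rw [owing, if_neg h]

lemma even_of_mem_owing {l : Q} (hl : l ∈ M.owing w g i) : Even (g (i, l)) := by
  cases i with
  | zero => exact hl.elim
  | succ i => exact hl.2

lemma owing_subset_reachAt (M : NBW Q A) (w : ℕ → A) (g : ℕ × Q → ℕ) (i : ℕ) :
    M.owing w g i ⊆ M.reachAt w i := by
  induction i with
  | zero => exact Set.empty_subset _
  | succ i ih =>
    refine (Set.sep_subset _ _).trans (post_mono ?_)
    split_ifs
    exacts [subset_rfl, ih]

namespace IsOddRanking

lemma ranked_mem_Qk (hg : M.IsOddRanking w k g) (i : ℕ) :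
    ranked g (i + 1) (M.reachAt w (i + 1)) ∈ Qk M k := by
  rintro _ ⟨l, hl, rfl⟩
  exact ⟨hg.le hl, hg.even (i + 1, l) hl i.succ_ne_zero⟩

lemma kvStep_ranked (hg : M.IsOddRanking w k g) (hS : S ⊆ M.reachAt w i) :
    kvStep M (w i) (ranked g i S) (ranked g (i + 1) (M.post (w i) S)) := by
  rintro _ ⟨l, hl, rfl⟩ l' hl'
  exact ⟨g (i + 1, l'), hg.le_of_edge (i, l) (hS hl) (i + 1, l') ⟨rfl, hl'⟩,
    l', mem_post.2 ⟨l, hl, hl'⟩, rfl⟩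

lemma ranked_sdiff_kvOdd (hg : M.IsOddRanking w k g) (hS : S ⊆ M.reachAt w i) :
    ranked g i S \ kvOdd Q k = ranked g i {l ∈ S | Even (g (i, l))} := by
  ext x
  constructor
  · rintro ⟨⟨l, hl, rfl⟩, hodd⟩
    exact ⟨l, ⟨hl, Nat.not_odd_iff_even.1 fun h => hodd ⟨h, hg.le (hS hl)⟩⟩, rfl⟩
  · rintro ⟨l, ⟨hl, heven⟩, rfl⟩
    exact ⟨⟨l, hl, rfl⟩, fun h => Nat.not_odd_iff_even.2 heven h.1⟩

lemma isRun_KVMH (hg : M.IsOddRanking w k g) :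
    (KVMH M k).IsRun w fun i => (ranked g i (M.reachAt w i), ranked g i (M.owing w g i)) := by
  refine ⟨?_, fun i => ?_⟩
  · simp only [ranked, reachAt, owing, Set.image_singleton, Set.image_empty, hg.init_eq, KVMH]
  have hQk := hg.ranked_mem_Qk i
  have hstep := hg.kvStep_ranked (i := i) subset_rfl
  have hsub := owing_subset_reachAt M w g i
  by_cases h : M.owing w g i = ∅
  · refine (mem_delta_KVMH_of_snd_eq_empty (Set.image_eq_empty.2 h)).2 ⟨hQk, hstep, ?_⟩
    simp only [owing_succ_of_eq_empty h, hg.ranked_sdiff_kvOdd subset_rfl]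
  · refine (mem_delta_KVMH_of_snd_ne_empty (mt Set.image_eq_empty.1 h)).2 ⟨hQk, hstep,
      ranked g (i + 1) (M.post (w i) (M.owing w g i)), Set.image_mono (post_mono hsub),
      hg.kvStep_ranked hsub, ?_⟩
    simp only [owing_succ_of_ne_empty h, hg.ranked_sdiff_kvOdd (i := i + 1) (post_mono hsub)]

lemma exists_owing_eq_empty (hg : M.IsOddRanking w k g) (hδ : ∀ l σ, (M.delta l σ).Finite) (n : ℕ) :
    ∃ i ≥ n, M.owing w g i = ∅ := by
  by_contra! hne
  have hsub (i : ℕ) := owing_subset_reachAt M w g (n + i)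
  obtain ⟨p, hp⟩ := exists_path_of_forall_exists_pred
    (S := fun i => M.owing w g (n + i)) (E := fun i l l' => l' ∈ M.delta l (w (n + i)))
    (fun i => (finite_reachAt hδ w (n + i)).subset (hsub i))
    (fun i => hne (n + i) (Nat.le_add_right n i))
    (fun i l hl => by
      rw [← Nat.add_assoc, owing_succ_of_ne_empty (hne _ (Nat.le_add_right n i)).ne_empty] at hl
      exact mem_post.1 hl.1)
  obtain ⟨i, hi⟩ := hg.exists_odd (fun i => (n + i, p i))
    fun i => ⟨hsub i (hp i).1, rfl, (hp i).2⟩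
  exact Nat.not_even_iff_odd.2 hi (even_of_mem_owing (hp i).1)

end IsOddRanking

end Completeness

theorem lang_KVMH (hδ : ∀ l σ, (M.delta l σ).Finite) (hacc : M.accᶜ.Finite)
    (hk : 2 * M.accᶜ.ncard ≤ k) : (KVMH M k).Lang = M.Langᶜ := by
  refine (disjoint_lang_KVMH M k).subset_compl_right.antisymm fun w hw => ?_
  obtain ⟨g, hg⟩ := exists_isOddRanking hacc hk hw
  refine ⟨_, hg.isRun_KVMH, fun n => ?_⟩
  obtain ⟨i, hi, hempty⟩ := hg.exists_owing_eq_empty hδ n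
  exact ⟨i, hi, Set.image_eq_empty.2 hempty⟩

end NBW

theorem universal_iff_fix_general {Q A : Type*} (M : NBW Q A) {k : ℕ}
    (hδ : ∀ l σ, (M.delta l σ).Finite) (hacc : M.accᶜ.Finite) (hk : 2 * M.accᶜ.ncard ≤ k) :
    M.Lang = Set.univ ↔
      (({(M.init, k)}, (∅ : Set (Q × ℕ))) : Set (Q × ℕ) × Set (Q × ℕ)) ∉
        (KVMH M k).FixF :=
  calc
    M.Lang = Set.univ ↔ (KVMH M k).Lang = ∅ := by
      rw [NBW.lang_KVMH hδ hacc hk, Set.compl_empty_iff]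
    _ ↔ (KVMH M k).init ∉ (KVMH M k).FixF := by
      rw [NBW.init_mem_fixF_iff, Set.not_nonempty_iff_eq_empty]

/-- `A` is universal iff `⟨{(ι,k)}, ∅⟩ ∉ ν y · μ x · (Pre(x) ∪ (Pre(y) ∩ α'))`
in `KVMH(A)` for `k = 2(|L| - |α|)`. -/
theorem universal_iff_fix {Q A : Type*} [Fintype Q] [Fintype A] (M : NBW Q A) (k : ℕ)
    (hk : k = 2 * (Fintype.card Q - M.acc.ncard)) :
    M.Lang = Set.univ ↔
      (({(M.init, k)}, (∅ : Set (Q × ℕ))) : Set (Q × ℕ) × Set (Q × ℕ)) ∉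
        (KVMH M k).FixF := by
  rw [← Nat.card_eq_fintype_card, ← Set.ncard_compl] at hk
  exact universal_iff_fix_general M (fun _ _ => Set.toFinite _) (Set.toFinite _) hk.ge
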